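/- arXiv:1110.1798 — 2 statements merged into one kernel-verified Lean document; each statement's English description precedes it below -/
import Mathlib

section
/- Let n be a positive integer with n ≡ 0 (mod 4), let τ, A, A_C be integers, and set Q = ((-1)^{n/4}·B_{n/2} − B_{n/4})/(B_{n/2}·B_{n/4}) ∈ ℚ. If the equation A_C = 2n·(1 + 1/B_{n/2} + ((2^{n-1}−1)/(2^{n/2}−1)^2)·Q)·A + (1/(2^{n/2}−1)^2)·Q·(n·τ/2^n) holds in ℚ, then A_C is even if and only if the rational number Q·(n·τ/2^n) is congruent to 0 modulo 2 as a 2-adic integer, i.e., if and only if (1/2)·Q·(n·τ/2^n) has odd denominator in lowest terms. -/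
/-- The topologists' Bernoulli number `B_k`: the absolute value of the `(2k)`-th
Bernoulli number, so `topB 1 = 1/6`, `topB 2 = 1/30`, etc. -/
def topB (k : ℕ) : ℚ := |bernoulli (2 * k)|

/-- The ring of rationals that are 2-adic integers. -/
noncomputable def zTwo : ValuationSubring ℚ := (Rat.padicValuation 2).valuationSubring

lemma mem_zTwo (q : ℚ) : q ∈ zTwo ↔ Odd q.den := by
  have h1 : q ∈ zTwo ↔ Rat.padicValuation 2 q ≤ 1 := Iff.rfl
  rw [h1, Rat.padicValuation_le_one_iff, ← Nat.not_even_iff_odd, even_iff_two_dvd]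

lemma half_not_mem_zTwo : (1 / 2 : ℚ) ∉ zTwo := by
  rw [mem_zTwo]
  have : ((1 / 2 : ℚ)).den = 2 := by norm_num
  rw [this]
  decide

lemma inv_odd_mem_zTwo (N : ℕ) (hN : Odd N) : ((N : ℚ))⁻¹ ∈ zTwo := by
  rw [mem_zTwo, Rat.inv_natCast_den_of_pos hN.pos]
  exact hN

lemma inv_bernoulli_mem (k : ℕ) (hk : 0 < k) : (bernoulli (2 * k))⁻¹ ∈ zTwo := by
  rcases zTwo.mem_or_inv_mem (bernoulli (2 * k)) with h | h
  · exfalso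
    obtain ⟨m, hm⟩ := Bernoulli.vonStaudt_clausen k
    have h2 : 2 ∈ (Finset.range (2 * k + 2)).filter
        (fun p => p.Prime ∧ (p - 1) ∣ 2 * k) := by
      simp [Nat.prime_two, hk]
    rw [← Finset.add_sum_erase _ _ h2] at hm
    have hs : ∑ p ∈ ((Finset.range (2 * k + 2)).filter
        (fun p => p.Prime ∧ (p - 1) ∣ 2 * k)).erase 2, (1 : ℚ) / p ∈ zTwo := by
      apply sum_mem
      intro p hp
      rw [one_div]
      simp only [Finset.mem_erase, Finset.mem_filter] at hp
      exact inv_odd_mem_zTwo p (hp.2.2.1.odd_of_ne_two hp.1)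
    have hmem := sub_mem (sub_mem (intCast_mem zTwo m) h) hs
    apply half_not_mem_zTwo
    convert hmem using 1
    rw [hm]
    push_cast
    ring
  · exact h

lemma inv_topB_mem (k : ℕ) (hk : 0 < k) : (topB k)⁻¹ ∈ zTwo := by
  unfold topB
  rcases abs_choice (bernoulli (2 * k)) with h | h <;> rw [h]
  · exact inv_bernoulli_mem k hk
  · rw [inv_neg]
    exact zTwo.neg_mem _ (inv_bernoulli_mem k hk)

lemma topB_ne_zero (k : ℕ) (hk : 0 < k) : topB k ≠ 0 := by
  intro h0
  obtain ⟨m, hm⟩ := Bernoulli.vonStaudt_clausen k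
  have hb : bernoulli (2 * k) = 0 := abs_eq_zero.mp h0
  have h2 : 2 ∈ (Finset.range (2 * k + 2)).filter
      (fun p => p.Prime ∧ (p - 1) ∣ 2 * k) := by
    simp [Nat.prime_two, hk]
  rw [← Finset.add_sum_erase _ _ h2, hb] at hm
  have hs : ∑ p ∈ ((Finset.range (2 * k + 2)).filter
      (fun p => p.Prime ∧ (p - 1) ∣ 2 * k)).erase 2, (1 : ℚ) / p ∈ zTwo := by
    apply sum_mem
    intro p hp
    rw [one_div]
    simp only [Finset.mem_erase, Finset.mem_filter] at hp
    exact inv_odd_mem_zTwo p (hp.2.2.1.odd_of_ne_two hp.1)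
  have hmem := sub_mem (intCast_mem zTwo m) hs
  apply half_not_mem_zTwo
  convert hmem using 1
  rw [hm]
  push_cast
  ring

lemma even_iff_half_mem (z : ℤ) : Even z ↔ (1 / 2 : ℚ) * z ∈ zTwo := by
  constructor
  · rintro ⟨r, rfl⟩
    convert intCast_mem zTwo r using 1
    push_cast
    ring
  · intro h
    by_contra hz
    obtain ⟨r, rfl⟩ := Int.not_even_iff_odd.mp hz
    apply half_not_mem_zTwo
    convert sub_mem h (intCast_mem zTwo r) using 1
    push_cast
    ring

/-- Let `n ≡ 0 (mod 4)` be positive and `τ, A, A_C` integers.  Set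
`Q = ((-1)^(n/4) B_{n/2} - B_{n/4}) / (B_{n/2} B_{n/4})`.  If
`A_C = 2n (1 + 1/B_{n/2} + ((2^(n-1)-1)/(2^(n/2)-1)^2) Q) A
      + (1/(2^(n/2)-1)^2) Q (n τ / 2^n)`
holds in `ℚ`, then `A_C` is even if and only if `Q * (n τ / 2^n)` is congruent to
`0` modulo `2` as a 2-adic integer, i.e. iff `(1/2) * Q * (n τ / 2^n)` has odd
denominator in lowest terms. -/
theorem even_iff_two_adic_zero_mod_two (n : ℕ) (hn : 0 < n) (h4 : n % 4 = 0)
    (τ A A_C : ℤ)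
    (Q : ℚ)
    (hQ : Q = ((-1 : ℚ) ^ (n / 4) * topB (n / 2) - topB (n / 4)) /
      (topB (n / 2) * topB (n / 4)))
    (heq : (A_C : ℚ) =
      2 * n * (1 + 1 / topB (n / 2)
          + ((2 ^ (n - 1) - 1) / (2 ^ (n / 2) - 1) ^ 2) * Q) * A
        + (1 / (2 ^ (n / 2) - 1) ^ 2) * Q * (n * τ / 2 ^ n)) :
    Even A_C ↔ Odd ((1 / 2 : ℚ) * Q * (n * τ / 2 ^ n)).den := by
  have hu : ((2 : ℚ) ^ (n / 2) - 1) = ((2 ^ (n / 2) - 1 : ℕ) : ℚ) := by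
    rw [Nat.cast_sub Nat.one_le_two_pow]
    push_cast
    ring
  have hodd : Odd (2 ^ (n / 2) - 1 : ℕ) := by
    apply Nat.Even.sub_odd Nat.one_le_two_pow _ odd_one
    exact (even_two).pow_of_ne_zero (by omega)
  have hui := inv_odd_mem_zTwo _ hodd
  have hu0 : ((2 : ℚ) ^ (n / 2) - 1) ≠ 0 := by
    rw [hu]
    exact_mod_cast (ne_of_gt hodd.pos)
  rw [← hu] at hui
  have huS : ((2 : ℚ) ^ (n / 2) - 1) ∈ zTwo := by
    rw [hu]
    exact natCast_mem zTwo _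
  have h2S : (2 : ℚ) ∈ zTwo := by exact_mod_cast natCast_mem zTwo 2
  have hb1 := inv_topB_mem (n / 2) (by omega)
  have hb2 := inv_topB_mem (n / 4) (by omega)
  have hn1 := topB_ne_zero (n / 2) (by omega)
  have hn2 := topB_ne_zero (n / 4) (by omega)
  have hQS : Q ∈ zTwo := by
    have : Q = (-1) ^ (n / 4) * (topB (n / 4))⁻¹ - (topB (n / 2))⁻¹ := by
      rw [hQ]
      field_simp
    rw [this]
    exact sub_mem (mul_mem (pow_mem (neg_mem (one_mem _)) _) hb2) hb1
  generalize (2 : ℚ) ^ (n / 2) - 1 = u at *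
  have hT : (n : ℚ) * (1 + 1 / topB (n / 2) + ((2 ^ (n - 1) - 1) / u ^ 2) * Q) * A ∈ zTwo := by
    rw [one_div, div_eq_mul_inv, ← inv_pow]
    refine mul_mem (mul_mem (natCast_mem _ _) (add_mem (add_mem (one_mem _) hb1)
      (mul_mem (mul_mem (sub_mem (pow_mem h2S _) (one_mem _)) (pow_mem hui _)) hQS)))
      (intCast_mem _ _)
  rw [even_iff_half_mem, ← mem_zTwo]
  set T := (n : ℚ) * (1 + 1 / topB (n / 2) + ((2 ^ (n - 1) - 1) / u ^ 2) * Q) * A with hTdef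
  have key : (1 / 2 : ℚ) * A_C = T + u⁻¹ ^ 2 * ((1 / 2 : ℚ) * Q * (n * τ / 2 ^ n)) := by
    rw [heq, hTdef]
    ring
  have key2 : (1 / 2 : ℚ) * Q * (n * τ / 2 ^ n) = u ^ 2 * ((1 / 2 : ℚ) * A_C - T) := by
    rw [key, add_sub_cancel_left, ← mul_assoc, ← mul_pow, mul_inv_cancel₀ hu0, one_pow, one_mul]
  constructor
  · intro h
    rw [key2]
    exact mul_mem (pow_mem huS _) (sub_mem h hT)
  · intro h
    rw [key]
    exact add_mem hT (mul_mem (pow_mem hui _) h)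
end

section
/- Let n be a positive integer with n ≡ 4 (mod 8), let τ, A, A_C be integers, and set Q = (−B_{n/2} − B_{n/4})/(B_{n/2}·B_{n/4}) ∈ ℚ. If the equation A_C = 2n·(1 + 1/B_{n/2} + ((2^{n-1}−1)/(2^{n/2}−1)^2)·Q)·A + (1/(2^{n/2}−1)^2)·Q·(n·τ/2^n) holds in ℚ, then A_C is even if and only if the rational number ((B_{n/2} + B_{n/4})/(B_{n/2}·B_{n/4}))·(τ/2^{n−2}) is congruent to 0 modulo 2 as a 2-adic integer, i.e., if and only if (1/2)·((B_{n/2} + B_{n/4})/(B_{n/2}·B_{n/4}))·(τ/2^{n−2}) has odd denominator in lowest terms. -/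
/-- The subring of 2-integral rationals. -/
noncomputable abbrev twoInt : ValuationSubring ℚ := (Rat.padicValuation 2).valuationSubring

lemma mem_twoInt {x : ℚ} : x ∈ twoInt ↔ Odd x.den := by
  rw [Valuation.mem_valuationSubring_iff, Rat.padicValuation_le_one_iff, ← Nat.not_even_iff_odd,
    even_iff_two_dvd]

lemma half_notMem : (1 / 2 : ℚ) ∉ twoInt := by
  rw [mem_twoInt]
  norm_num

lemma int_mem_twoInt (z : ℤ) : (z : ℚ) ∈ twoInt := by
  rw [mem_twoInt]; simp

lemma half_int_mem {z : ℤ} : (z : ℚ) / 2 ∈ twoInt ↔ Even z := by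
  constructor
  · intro h
    by_contra ho
    obtain ⟨w, rfl⟩ := Int.not_even_iff_odd.mp ho
    apply half_notMem
    have := sub_mem h (int_mem_twoInt w)
    convert this using 1
    push_cast
    ring
  · rintro ⟨w, rfl⟩
    convert int_mem_twoInt w using 1
    push_cast
    ring

lemma inv_odd_mem {z : ℕ} (hz : Odd z) : (z : ℚ)⁻¹ ∈ twoInt := by
  rw [mem_twoInt]
  have : z ≠ 0 := by rintro rfl; simp at hz
  simpa [this] using hz

lemma bernoulli_notMem {k : ℕ} (hk : 0 < k) : bernoulli (2 * k) ∉ twoInt := by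
  intro hb
  obtain ⟨T, hT⟩ := Bernoulli.vonStaudt_clausen k
  rw [← Finset.add_sum_erase _ _ (a := 2)
    (by simp only [Finset.mem_filter, Finset.mem_range]
        exact ⟨by omega, Nat.prime_two, by simp⟩)] at hT
  apply half_notMem
  have hs : (∑ p ∈ ((Finset.range (2 * k + 2)).filter
      (fun p => p.Prime ∧ (p - 1) ∣ 2 * k)).erase 2, (1 : ℚ) / p) ∈ twoInt := by
    apply sum_mem
    intro p hp
    simp only [Finset.mem_erase, Finset.mem_filter] at hp
    rw [one_div]
    exact inv_odd_mem (hp.2.2.1.odd_of_ne_two hp.1)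
  have := sub_mem (sub_mem (int_mem_twoInt T) hb) hs
  convert this using 1
  rw [hT]
  push_cast
  ring

lemma topB_notMem {k : ℕ} (hk : 0 < k) : topB k ∉ twoInt := by
  intro h
  apply bernoulli_notMem hk
  unfold topB at h
  rcases abs_choice (bernoulli (2 * k)) with h' | h' <;> rw [h'] at h
  · exact h
  · simpa using neg_mem h

lemma topB_ne {k : ℕ} (hk : 0 < k) : topB k ≠ 0 := fun h =>
  topB_notMem hk (h ▸ twoInt.zero_mem)

lemma topB_inv_mem {k : ℕ} (hk : 0 < k) : (topB k)⁻¹ ∈ twoInt :=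
  (twoInt.mem_or_inv_mem _).resolve_left (topB_notMem hk)

/-- Let `n ≡ 4 (mod 8)` be positive and `τ, A, A_C` integers.  Set
`Q = (-B_{n/2} - B_{n/4}) / (B_{n/2} B_{n/4})`.  If
`A_C = 2n (1 + 1/B_{n/2} + ((2^(n-1)-1)/(2^(n/2)-1)^2) Q) A
      + (1/(2^(n/2)-1)^2) Q (n τ / 2^n)`
holds in `ℚ`, then `A_C` is even if and only if
`((B_{n/2} + B_{n/4})/(B_{n/2} B_{n/4})) * (τ / 2^(n-2))` is congruent to `0`
modulo `2` as a 2-adic integer, i.e. iff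
`(1/2) * ((B_{n/2} + B_{n/4})/(B_{n/2} B_{n/4})) * (τ / 2^(n-2))` has odd
denominator in lowest terms. -/
theorem even_iff_two_adic_zero_mod_two_mod_eight (n : ℕ) (hn : 0 < n)
    (h8 : n % 8 = 4)
    (τ A A_C : ℤ)
    (Q : ℚ)
    (hQ : Q = (-topB (n / 2) - topB (n / 4)) / (topB (n / 2) * topB (n / 4)))
    (heq : (A_C : ℚ) =
      2 * n * (1 + 1 / topB (n / 2)
          + ((2 ^ (n - 1) - 1) / (2 ^ (n / 2) - 1) ^ 2) * Q) * A
        + (1 / (2 ^ (n / 2) - 1) ^ 2) * Q * (n * τ / 2 ^ n)) :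
    Even A_C ↔ Odd (((1 / 2 : ℚ)
      * ((topB (n / 2) + topB (n / 4)) / (topB (n / 2) * topB (n / 4)))
      * (τ / 2 ^ (n - 2))).den) := by
  rw [← mem_twoInt, ← half_int_mem]
  obtain ⟨m, rfl, hmo⟩ : ∃ m, n = 4 * m ∧ Odd m := ⟨n / 4, by omega, by
    rw [Nat.odd_iff]; omega⟩
  have hm0 : 0 < m := by omega
  have e2 : 4 * m / 2 = 2 * m := by omega
  have e4 : 4 * m / 4 = m := by omega
  rw [e2, e4] at hQ ⊢
  rw [e2] at heq
  have hB1 := topB_ne (k := 2 * m) (by omega)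
  have hB2 := topB_ne hm0
  have iB1 := topB_inv_mem (k := 2 * m) (by omega)
  have iB2 := topB_inv_mem hm0
  generalize topB (2 * m) = b at *
  generalize topB m = c at *
  have hS : (b + c) / (b * c) = b⁻¹ + c⁻¹ := by field_simp; ring
  have hQ' : Q = -(b⁻¹ + c⁻¹) := by rw [hQ, ← hS]; ring
  have hSm := add_mem iB1 iB2
  rw [hS]
  generalize hSS : b⁻¹ + c⁻¹ = S at *
  have hD : ((2 : ℚ) ^ (2 * m) - 1) = ((2 ^ (2 * m) - 1 : ℕ) : ℚ) := by
    rw [Nat.cast_sub Nat.one_le_two_pow]; push_cast; rfl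
  have hDo : Odd (2 ^ (2 * m) - 1 : ℕ) := by
    apply Nat.Even.sub_odd Nat.one_le_two_pow _ odd_one
    exact (Nat.even_pow.mpr ⟨even_two, by omega⟩)
  rw [hD] at heq
  generalize (2 ^ (2 * m) - 1 : ℕ) = D at *
  have hD0 : (D : ℚ) ≠ 0 := by
    have := hDo.pos
    positivity
  have iD := inv_odd_mem hDo
  have im := inv_odd_mem hmo
  have hDm : (D : ℚ) ∈ twoInt := natCast_mem _ D
  have hmm : (m : ℚ) ∈ twoInt := natCast_mem _ m
  have hmq : (m : ℚ) ≠ 0 := by positivity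
  have hp : (2 : ℚ) ^ (4 * m) = 4 * 2 ^ (4 * m - 2) := by
    rw [show 4 * m = (4 * m - 2) + 2 by omega, pow_add]; norm_num; ring
  have hY : ((4 * m : ℕ) : ℚ) * (1 + 1 / b + ((2 ^ (4 * m - 1) - 1) / (D : ℚ) ^ 2) * Q) * A
      ∈ twoInt := by
    have h2 : (2 : ℚ) ∈ twoInt := by exact_mod_cast natCast_mem twoInt 2
    rw [hQ', one_div, div_eq_mul_inv, ← inv_pow]
    exact mul_mem (mul_mem (natCast_mem _ _) (add_mem (add_mem (one_mem _) iB1)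
      (mul_mem (mul_mem (sub_mem (pow_mem h2 _) (one_mem _)) (pow_mem iD 2)) (neg_mem hSm))))
      (int_mem_twoInt A)
  generalize hYY : ((4 * m : ℕ) : ℚ) * (1 + 1 / b + ((2 ^ (4 * m - 1) - 1) / (D : ℚ) ^ 2) * Q) * A
    = Y at *
  have key : (A_C : ℚ) / 2 = Y - (D : ℚ)⁻¹ ^ 2 * m * (1 / 2 * S * (τ / 2 ^ (4 * m - 2))) := by
    rw [heq, ← hYY, hp, hQ']
    push_cast
    field_simp
    ring
  generalize (1 / 2 * S * (τ / 2 ^ (4 * m - 2)) : ℚ) = X at *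
  constructor
  · intro h
    have : X = (Y - (A_C : ℚ) / 2) * (D : ℚ) ^ 2 * (m : ℚ)⁻¹ := by
      rw [key]; field_simp; ring
    rw [this]
    exact mul_mem (mul_mem (sub_mem hY h) (pow_mem hDm 2)) im
  · intro h
    rw [key]
    exact sub_mem hY (mul_mem (mul_mem (pow_mem iD 2) hmm) h)
end
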